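/- Let (A, t) be a C_k-algebra and let K(A) = {x ∈ A : t(x) = x and ∇x = x}. Then: (b) K(A) contains 0 and 1, is closed under ∧, ∨, ∼ and *, and is a Boolean algebra (for every x ∈ K(A), x ∧ ∼x = 0 and x ∨ ∼x = 1); (d) for a ∈ A, the principal filter [a) = {x ∈ A : a ≤ x} is a c-filter if and only if a ∈ K(A); (e) if a ∈ K(A), then the smallest cyclic deductive system containing a equals [a). -/

import Mathlib

universe u

/-- Modal pseudocomplemented De Morgan algebra (mpM-algebra). -/
class MpM (A : Type u) extends DistribLattice A, BoundedOrder A where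
  dm : A → A   -- De Morgan negation ∼
  ps : A → A   -- pseudocomplement *
  dm_dm : ∀ x : A, dm (dm x) = x
  dm_sup : ∀ x y : A, dm (x ⊔ y) = dm x ⊓ dm y
  pseudo : ∀ a x : A, a ⊓ x = ⊥ ↔ x ≤ ps a
  modal : ∀ x : A, x ⊔ dm x ≤ x ⊔ ps x

open MpM

variable {A : Type u} [MpM A]

/-- ∇x = ∼(∼x ∧ x*) -/
def nabla (x : A) : A := dm (dm x ⊓ ps x)

/-- △x = ∼∇∼x -/
def tri (x : A) : A := dm (nabla (dm x))

/-- A C_k-algebra structure on an mpM-algebra `A`: an automorphism `t` with `t^k = id`. -/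
structure CkStr (A : Type u) [MpM A] (k : ℕ) where
  t : A → A
  bij : Function.Bijective t
  map_inf : ∀ x y : A, t (x ⊓ y) = t x ⊓ t y
  map_sup : ∀ x y : A, t (x ⊔ y) = t x ⊔ t y
  map_dm : ∀ x : A, t (dm x) = dm (t x)
  map_ps : ∀ x : A, t (ps x) = ps (t x)
  map_bot : t (⊥ : A) = ⊥
  map_top : t (⊤ : A) = ⊤
  periodic : ∀ x : A, t^[k] x = x

/-- Lattice filter: nonempty, upward closed, closed under binary meets. -/
def IsLatFilter (F : Set A) : Prop :=
  F.Nonempty ∧ (∀ x ∈ F, ∀ y : A, x ≤ y → y ∈ F) ∧ ∀ x ∈ F, ∀ y ∈ F, x ⊓ y ∈ F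

/-- c-filter: a filter closed under △ and t. -/
def IsCFilter {k : ℕ} (T : CkStr A k) (F : Set A) : Prop :=
  IsLatFilter F ∧ ∀ x ∈ F, tri x ∈ F ∧ T.t x ∈ F

/-- maximal c-filter: proper and not properly contained in a proper c-filter. -/
def IsMaxCFilter {k : ℕ} (T : CkStr A k) (N : Set A) : Prop :=
  IsCFilter T N ∧ N ≠ Set.univ ∧
    ∀ G : Set A, IsCFilter T G → G ≠ Set.univ → N ⊆ G → N = G

/-- prime filter -/
def IsPrimeFilter (P : Set A) : Prop :=
  IsLatFilter P ∧ P ≠ Set.univ ∧ ∀ x y : A, x ⊔ y ∈ P → x ∈ P ∨ y ∈ P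

/-- ultrafilter: maximal proper (lattice) filter -/
def IsUltraFilter (U : Set A) : Prop :=
  IsLatFilter U ∧ U ≠ Set.univ ∧
    ∀ G : Set A, IsLatFilter G → G ≠ Set.univ → U ⊆ G → U = G

/-- Birula–Rasiowa transformation φ(P) = A \ {∼x : x ∈ P}. -/
def brPhi (P : Set A) : Set A := Set.univ \ (dm '' P)

/-- a ⇁ b = (⋁_{i=1}^{k} ∇(∼ t^i(a))) ∨ b -/
def rimp {k : ℕ} (T : CkStr A k) (a b : A) : A :=
  ((Finset.Icc 1 k).sup fun i => nabla (dm (T.t^[i] a))) ⊔ b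

/-- cyclic deductive system -/
def IsCDS {k : ℕ} (T : CkStr A k) (D : Set A) : Prop :=
  (⊤ : A) ∈ D ∧ ∀ x ∈ D, ∀ y : A, rimp T x y ∈ D → y ∈ D

/-- maximal cyclic deductive system -/
def IsMaxCDS {k : ℕ} (T : CkStr A k) (M : Set A) : Prop :=
  IsCDS T M ∧ M ≠ Set.univ ∧
    ∀ G : Set A, IsCDS T G → G ≠ Set.univ → M ⊆ G → M = G

/-- the smallest cyclic deductive system containing `X` -/
def genCDS {k : ℕ} (T : CkStr A k) (X : Set A) : Set A :=
  ⋂₀ {D : Set A | IsCDS T D ∧ X ⊆ D}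

/-- K(A) = {x : t(x) = x and ∇x = x} -/
def Kset {k : ℕ} (T : CkStr A k) : Set A := {x : A | T.t x = x ∧ nabla x = x}

/-- consistency operator ∘x = ⋀_{i=0}^{k} t^i((∼x ∨ x) ∧ (x ∧ ∼x)*) -/
def cCirc {k : ℕ} (T : CkStr A k) (x : A) : A :=
  (Finset.Icc 0 k).inf fun i => T.t^[i] ((dm x ⊔ x) ⊓ ps (x ⊓ dm x))

/-- x → y = ∼((∼(x∨y))* ∧ (x∨y)) ∨ ((∼(x∧y))* ∧ (x∧y)) -/
def mpTo (x y : A) : A :=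
  dm (ps (dm (x ⊔ y)) ⊓ (x ⊔ y)) ⊔ (ps (dm (x ⊓ y)) ⊓ (x ⊓ y))

/-- x ⇒ y = (x → y) ∧ (∼y → ∼x) -/
def mpIff (x y : A) : A := mpTo x y ⊓ mpTo (dm y) (dm x)

/-! By the modal law `∼△x` is a complement of `△x`. Hence for a c-filter `F` and `x ∈ F` the meet
`⋀ △(tⁱ x)`, which lies in `F`, is disjoint from the join `⋁ ∇∼(tⁱ x)` in `x ⇁ y`, and so every
c-filter is a cyclic deductive system. On the other hand `∇∼x ∨ x = 1` holds for every `x`, so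
`x ⇁ y = 1` whenever `x ≤ y`, and cyclic deductive systems are upward closed. Finally `∇x = x` says
that `∼x` is a complement of `x`, equivalently that `x ≤ △x`; and `x ≤ t(x)` forces `t(x) = x`
because `t` is monotone and has finite order. -/

namespace MpM

variable {x y : A}

theorem dm_antitone : Antitone (dm : A → A) := fun x y h => by
  rw [← sup_eq_right.mpr h, dm_sup]
  exact inf_le_left

theorem dm_inf (x y : A) : dm (x ⊓ y) = dm x ⊔ dm y := by
  rw [← dm_dm (dm x ⊔ dm y), dm_sup, dm_dm, dm_dm]

theorem dm_bot : dm (⊥ : A) = ⊤ :=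
  top_le_iff.mp <| (dm_dm ⊤).ge.trans (dm_antitone bot_le)

theorem le_ps_iff_disjoint : x ≤ ps y ↔ Disjoint y x :=
  (pseudo y x).symm.trans disjoint_iff.symm

theorem disjoint_ps (x : A) : Disjoint x (ps x) :=
  le_ps_iff_disjoint.mp le_rfl

theorem ps_antitone : Antitone (ps : A → A) := fun _ _ h =>
  le_ps_iff_disjoint.mpr ((disjoint_ps _).mono_left h)

theorem ps_eq_of_isCompl (h : IsCompl x y) : ps x = y :=
  eq_of_forall_le_iff fun _ => le_ps_iff_disjoint.trans (disjoint_comm.trans h.disjoint_left_iff)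

theorem isCompl_dm_iff_disjoint : IsCompl x (dm x) ↔ Disjoint x (dm x) := by
  refine ⟨IsCompl.disjoint, fun h => ⟨h, codisjoint_iff.mpr ?_⟩⟩
  rw [← dm_bot, ← h.eq_bot, dm_inf, dm_dm, sup_comm]

theorem tri_eq_inf_ps (x : A) : tri x = x ⊓ ps (dm x) := by
  rw [tri, nabla, dm_dm, dm_dm]

theorem nabla_dm (x : A) : nabla (dm x) = dm (tri x) :=
  (dm_dm _).symm

theorem tri_mono : Monotone (tri : A → A) := fun x y h => by
  rw [tri_eq_inf_ps, tri_eq_inf_ps]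
  exact inf_le_inf h (ps_antitone (dm_antitone h))

theorem nabla_eq_self_iff_isCompl : nabla x = x ↔ IsCompl x (dm x) := by
  rw [isCompl_dm_iff_disjoint, ← le_ps_iff_disjoint, ← inf_eq_left, nabla]
  exact ⟨fun h => by rw [← dm_dm (dm x ⊓ ps x), h], fun h => by rw [h, dm_dm]⟩

theorem le_tri_iff_isCompl : x ≤ tri x ↔ IsCompl x (dm x) := by
  rw [tri_eq_inf_ps, le_inf_iff, and_iff_right le_rfl, le_ps_iff_disjoint, disjoint_comm,
    isCompl_dm_iff_disjoint]

theorem disjoint_tri_dm (x : A) : Disjoint (tri x) (dm x) := by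
  rw [tri_eq_inf_ps]
  exact (disjoint_ps (dm x)).symm.mono_left inf_le_right

theorem nabla_dm_sup_self (x : A) : nabla (dm x) ⊔ x = ⊤ := by
  calc nabla (dm x) ⊔ x = dm (tri x ⊓ dm x) := by rw [nabla_dm, dm_inf, dm_dm]
    _ = ⊤ := by rw [(disjoint_tri_dm x).eq_bot, dm_bot]

theorem inf_dm_ps_dm_le (x : A) : x ⊓ dm (ps (dm x)) ≤ dm x := by
  calc x ⊓ dm (ps (dm x)) = dm (dm x ⊔ ps (dm x)) := by rw [dm_sup, dm_dm]
    _ ≤ dm (dm x ⊔ dm (dm x)) := dm_antitone (modal (dm x))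
    _ = x ⊓ dm x := by rw [dm_sup, dm_dm]
    _ ≤ dm x := inf_le_right

theorem disjoint_tri_dm_tri (x : A) : Disjoint (tri x) (dm (tri x)) := by
  have htri : tri x ≤ x := (tri_eq_inf_ps x).trans_le inf_le_left
  have hle : tri x ⊓ dm (ps (dm x)) ≤ dm x :=
    (inf_le_inf_right _ htri).trans (inf_dm_ps_dm_le x)
  have hdm : dm (tri x) = dm x ⊔ dm (ps (dm x)) := by rw [tri_eq_inf_ps, dm_inf]
  rw [hdm, disjoint_sup_right]
  exact ⟨disjoint_tri_dm x,
    disjoint_iff_inf_le.mpr (disjoint_tri_dm x inf_le_left hle)⟩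

end MpM

theorem eq_of_le_map_of_isPeriodicPt {α : Type*} [PartialOrder α] {f : α → α} {n : ℕ} {a : α}
    (hf : Monotone f) (hn : 0 < n) (hper : Function.IsPeriodicPt f n a) (h : a ≤ f a) :
    f a = a :=
  h.antisymm' <| by
    simpa only [Function.iterate_one, hper.eq] using
      hf.monotone_iterate_of_le_map h (Nat.succ_le_of_lt hn)

section

variable {k : ℕ} {T : CkStr A k} {F D : Set A} {a x y : A}

theorem CkStr.monotone_t (T : CkStr A k) : Monotone T.t := fun x y h => by
  rw [← inf_eq_left.mpr h, T.map_inf]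
  exact inf_le_right

theorem CkStr.le_t_iff (T : CkStr A k) (hk : 0 < k) : x ≤ T.t x ↔ T.t x = x :=
  ⟨eq_of_le_map_of_isPeriodicPt T.monotone_t hk (T.periodic x), Eq.ge⟩

theorem mem_Kset_iff_isCompl : x ∈ Kset T ↔ T.t x = x ∧ IsCompl x (dm x) :=
  and_congr_right' nabla_eq_self_iff_isCompl

theorem bot_mem_Kset : (⊥ : A) ∈ Kset T :=
  mem_Kset_iff_isCompl.mpr ⟨T.map_bot, dm_bot (A := A) ▸ isCompl_bot_top⟩

theorem dm_mem_Kset (hx : x ∈ Kset T) : dm x ∈ Kset T := by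
  rw [mem_Kset_iff_isCompl] at *
  exact ⟨by rw [T.map_dm, hx.1], (dm_dm x).symm ▸ hx.2.symm⟩

theorem top_mem_Kset : (⊤ : A) ∈ Kset T :=
  dm_bot (A := A) ▸ dm_mem_Kset bot_mem_Kset

theorem inf_mem_Kset (hx : x ∈ Kset T) (hy : y ∈ Kset T) : x ⊓ y ∈ Kset T := by
  rw [mem_Kset_iff_isCompl] at *
  exact ⟨by rw [T.map_inf, hx.1, hy.1], (dm_inf x y).symm ▸ hx.2.inf_sup hy.2⟩

theorem sup_mem_Kset (hx : x ∈ Kset T) (hy : y ∈ Kset T) : x ⊔ y ∈ Kset T := by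
  rw [mem_Kset_iff_isCompl] at *
  exact ⟨by rw [T.map_sup, hx.1, hy.1], (dm_sup x y).symm ▸ hx.2.sup_inf hy.2⟩

theorem ps_mem_Kset (hx : x ∈ Kset T) : ps x ∈ Kset T :=
  ps_eq_of_isCompl (mem_Kset_iff_isCompl.mp hx).2 ▸ dm_mem_Kset hx

theorem IsLatFilter.top_mem (hF : IsLatFilter F) : ⊤ ∈ F :=
  let ⟨⟨x, hx⟩, hup, _⟩ := hF
  hup x hx ⊤ le_top

theorem isLatFilter_Ici (a : A) : IsLatFilter (Set.Ici a) :=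
  ⟨Set.nonempty_Ici, fun _ hx _ hxy => le_trans hx hxy, fun _ hx _ hy => le_inf hx hy⟩

theorem IsCFilter.iterate_t_mem (hF : IsCFilter T F) (hx : x ∈ F) (i : ℕ) : T.t^[i] x ∈ F :=
  Set.MapsTo.iterate (fun y hy => (hF.2 y hy).2) i hx

theorem isCFilter_Ici_iff : IsCFilter T (Set.Ici a) ↔ a ≤ tri a ∧ a ≤ T.t a :=
  ⟨fun h => h.2 a Set.self_mem_Ici, fun ⟨htri, ht⟩ => ⟨isLatFilter_Ici a, fun _ hx =>
    ⟨htri.trans (tri_mono hx), ht.trans (T.monotone_t hx)⟩⟩⟩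

theorem isCFilter_Ici_iff_mem_Kset (hk : 0 < k) : IsCFilter T (Set.Ici a) ↔ a ∈ Kset T := by
  rw [isCFilter_Ici_iff, le_tri_iff_isCompl, T.le_t_iff hk, and_comm, mem_Kset_iff_isCompl]

theorem IsCFilter.isCDS (hF : IsCFilter T F) : IsCDS T F := by
  obtain ⟨-, hup, hinf⟩ := hF.1
  refine ⟨hF.1.top_mem, fun x hx y hxy => ?_⟩
  let w : A := (Finset.Icc 1 k).inf fun i => tri (T.t^[i] x)
  have hw : w ∈ F := Finset.inf_mem F hF.1.top_mem hinf _ _ fun i _ =>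
    (hF.2 _ (hF.iterate_t_mem hx i)).1
  have hdisj : Disjoint w ((Finset.Icc 1 k).sup fun i => nabla (dm (T.t^[i] x))) :=
    Finset.disjoint_sup_right.mpr fun i hi => by
      rw [nabla_dm]
      exact (disjoint_tri_dm_tri _).mono_left (Finset.inf_le hi)
  exact hup _ (hinf w hw _ hxy) y <|
    (hdisj.mono_left inf_le_left).left_le_of_le_sup_left inf_le_right

theorem rimp_eq_top_of_le (hk : 0 < k) (h : x ≤ y) : rimp T x y = ⊤ := by
  have hle : nabla (dm x) ≤ (Finset.Icc 1 k).sup fun i => nabla (dm (T.t^[i] x)) := by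
    simpa only [T.periodic] using
      Finset.le_sup (f := fun i => nabla (dm (T.t^[i] x))) (Finset.right_mem_Icc.mpr hk)
  exact top_le_iff.mp <| (nabla_dm_sup_self x).ge.trans (sup_le_sup hle h)

theorem IsCDS.mem_of_le (hD : IsCDS T D) (hk : 0 < k) (hx : x ∈ D) (h : x ≤ y) : y ∈ D :=
  hD.2 x hx y ((rimp_eq_top_of_le (T := T) hk h).symm ▸ hD.1)

theorem genCDS_singleton_eq_Ici (hk : 0 < k) (ha : a ∈ Kset T) : genCDS T {a} = Set.Ici a := by
  refine subset_antisymm (Set.sInter_subset_of_mem ?_) (Set.subset_sInter ?_)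
  · exact ⟨((isCFilter_Ici_iff_mem_Kset hk).mpr ha).isCDS,
      Set.singleton_subset_iff.mpr Set.self_mem_Ici⟩
  · rintro D ⟨hD, haD⟩ x hx
    exact hD.mem_of_le hk (Set.singleton_subset_iff.mp haD) hx

end

theorem stmt13 {k : ℕ} (hk : 0 < k) (T : CkStr A k) :
    ((⊥ : A) ∈ Kset T ∧ (⊤ : A) ∈ Kset T ∧
      (∀ x ∈ Kset T, ∀ y ∈ Kset T, x ⊓ y ∈ Kset T ∧ x ⊔ y ∈ Kset T) ∧
      (∀ x ∈ Kset T, dm x ∈ Kset T ∧ ps x ∈ Kset T) ∧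
      (∀ x ∈ Kset T, x ⊓ dm x = ⊥ ∧ x ⊔ dm x = ⊤)) ∧
    (∀ a : A, IsCFilter T {x : A | a ≤ x} ↔ a ∈ Kset T) ∧
    (∀ a ∈ Kset T, genCDS T {a} = {x : A | a ≤ x}) := by
  refine ⟨⟨bot_mem_Kset, top_mem_Kset, ?_, ?_, ?_⟩, ?_, ?_⟩
  · exact fun x hx y hy => ⟨inf_mem_Kset hx hy, sup_mem_Kset hx hy⟩
  · exact fun x hx => ⟨dm_mem_Kset hx, ps_mem_Kset hx⟩
  · intro x hx
    have hcompl : IsCompl x (dm x) := (mem_Kset_iff_isCompl.mp hx).2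
    exact ⟨hcompl.inf_eq_bot, hcompl.sup_eq_top⟩
  · exact fun a => isCFilter_Ici_iff_mem_Kset hk
  · exact fun a ha => genCDS_singleton_eq_Ici hk ha
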